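/- Under Assumption (Lip), let, for each M, (𝛑, 𝛍) be a solution of the M equivalence classes method, let 𝛍̄ = Ψ(𝛑) be the exact mean field ensemble generated by the block-constant policy ensemble 𝛑, and let μ^{α_m} denote the method's approximate mean field on class Ĩ_m. Then for every t ∈ {0,…,T}, max_{m=1,…,M} sup_{α∈Ĩ_m} ‖μ̄^α_t − μ^{α_m}_t‖₁ → 0 as M → ∞, uniformly over the equivalence classes. -/

import Mathlib

open MeasureTheory Filter
open scoped BigOperators

namespace GMFG

variable {𝒳 𝒰 : Type*}

/-- The probability simplex 𝒫(𝒳) on a finite set, as probability mass functions. -/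
def simplex (𝒳 : Type*) [Fintype 𝒳] : Set (𝒳 → ℝ) :=
  {p | (∀ x, 0 ≤ p x) ∧ ∑ x, p x = 1}

/-- The set ℬ₁(𝒳) of (sub-probability) measures with total mass at most 1,
as mass functions. -/
def subProb (𝒳 : Type*) [Fintype 𝒳] : Set (𝒳 → ℝ) :=
  {p | (∀ x, 0 ≤ p x) ∧ ∑ x, p x ≤ 1}

/-- L¹ distance between measures on a finite set. -/
noncomputable def l1dist [Fintype 𝒳] (ν ν' : 𝒳 → ℝ) : ℝ := ∑ x, |ν x - ν' x|

/-- Markovian feedback policies π ∈ Π = 𝒫(𝒰)^{𝒯×𝒳}. -/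
def IsPolicy [Fintype 𝒰] (π : ℕ → 𝒳 → 𝒰 → ℝ) : Prop :=
  ∀ t x, (∀ u, 0 ≤ π t x u) ∧ ∑ u, π t x u = 1

/-- P : 𝒳×𝒰×ℬ₁(𝒳) → 𝒫(𝒳) is a transition kernel. -/
def IsKernel [Fintype 𝒳] [Fintype 𝒰] (P : 𝒳 → 𝒰 → (𝒳 → ℝ) → 𝒳 → ℝ) : Prop :=
  ∀ x u ν, ν ∈ subProb 𝒳 → P x u ν ∈ simplex 𝒳

/-- Lipschitz continuity of the transition kernel w.r.t. the L¹ norm. -/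
def KernelLipschitz [Fintype 𝒳] [Fintype 𝒰] (P : 𝒳 → 𝒰 → (𝒳 → ℝ) → 𝒳 → ℝ) (L : ℝ) : Prop :=
  ∀ x u ν ν', ν ∈ subProb 𝒳 → ν' ∈ subProb 𝒳 → l1dist (P x u ν) (P x u ν') ≤ L * l1dist ν ν'

/-- Lipschitz continuity of the reward w.r.t. the L¹ norm. -/
def RewardLipschitz [Fintype 𝒳] [Fintype 𝒰] (r : 𝒳 → 𝒰 → (𝒳 → ℝ) → ℝ) (L : ℝ) : Prop :=
  ∀ x u ν ν', ν ∈ subProb 𝒳 → ν' ∈ subProb 𝒳 → |r x u ν - r x u ν'| ≤ L * l1dist ν ν'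

/-- A graphon: symmetric, measurable, [0,1]-valued. -/
def IsGraphon (W : ℝ → ℝ → ℝ) : Prop :=
  Measurable (Function.uncurry W) ∧ (∀ a b, W a b = W b a) ∧ ∀ a b, W a b ∈ Set.Icc (0:ℝ) 1

/-- Lipschitz continuity of a graphon on [0,1]². -/
def GraphonLipschitz (W : ℝ → ℝ → ℝ) (L : ℝ) : Prop :=
  ∀ a b a' b' : ℝ, a ∈ Set.Icc (0:ℝ) 1 → b ∈ Set.Icc (0:ℝ) 1 → a' ∈ Set.Icc (0:ℝ) 1 →
    b' ∈ Set.Icc (0:ℝ) 1 → |W a b - W a' b'| ≤ L * (|a - a'| + |b - b'|)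

/-- The neighborhood mean field 𝔾^α = ∫₀¹ W(α,β) ν^β dβ of a state marginal ensemble ν. -/
noncomputable def nbhd [Fintype 𝒳] (W : ℝ → ℝ → ℝ) (ν : ℝ → 𝒳 → ℝ) (α : ℝ) : 𝒳 → ℝ :=
  fun x => ∫ β in Set.Ioc (0:ℝ) 1, W α β * ν β x

/-- 𝛍 = Ψ(𝛑): the (measurable) mean field ensemble generated by the policy ensemble 𝛑,
via μ^α_0 = μ₀ and
μ^α_{t+1}(x') = Σ_{x,u} μ^α_t(x) π^α_t(u|x) P(x'|x,u,𝔾^α_t). -/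
def IsMeanFieldOf [Fintype 𝒳] [Fintype 𝒰] (W : ℝ → ℝ → ℝ) (P : 𝒳 → 𝒰 → (𝒳 → ℝ) → 𝒳 → ℝ)
    (μ0 : 𝒳 → ℝ) (πe : ℝ → ℕ → 𝒳 → 𝒰 → ℝ) (μ : ℕ → ℝ → 𝒳 → ℝ) : Prop :=
  (∀ t x, Measurable fun α => μ t α x) ∧
  (∀ α ∈ Set.Icc (0:ℝ) 1, μ 0 α = μ0) ∧
  ∀ t : ℕ, ∀ α ∈ Set.Icc (0:ℝ) 1, ∀ x' : 𝒳,
    μ (t+1) α x' = ∑ x, μ t α x * ∑ u, πe α t x u * P x u (nbhd W (μ t) α) x'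

/-- The law of the state of a single mean field agent with neighborhood mean field
G and policy π: X_0 ∼ μ₀, U_t ∼ π_t(·|X_t), X_{t+1} ∼ P(·|X_t,U_t,G_t). -/
noncomputable def stateLaw [Fintype 𝒳] [Fintype 𝒰] (P : 𝒳 → 𝒰 → (𝒳 → ℝ) → 𝒳 → ℝ)
    (μ0 : 𝒳 → ℝ) (G : ℕ → 𝒳 → ℝ) (π : ℕ → 𝒳 → 𝒰 → ℝ) : ℕ → 𝒳 → ℝ
  | 0 => μ0
  | (t+1) => fun x' => ∑ x, stateLaw P μ0 G π t x * ∑ u, π t x u * P x u (G t) x'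

/-- Mean field objective J(π) = E[Σ_{t<T} r(X_t,U_t,G_t)] of a single agent whose
neighborhood mean field is G. -/
noncomputable def Jmf [Fintype 𝒳] [Fintype 𝒰] (T : ℕ) (r : 𝒳 → 𝒰 → (𝒳 → ℝ) → ℝ)
    (P : 𝒳 → 𝒰 → (𝒳 → ℝ) → 𝒳 → ℝ) (μ0 : 𝒳 → ℝ) (G : ℕ → 𝒳 → ℝ) (π : ℕ → 𝒳 → 𝒰 → ℝ) : ℝ :=
  ∑ t ∈ Finset.range T, ∑ x, stateLaw P μ0 G π t x * ∑ u, π t x u * r x u (G t)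

/-- A Graphon Mean Field Equilibrium: a measurable policy ensemble 𝛑 and mean field
ensemble 𝛍 with 𝛍 = Ψ(𝛑) and π^α optimal for J^𝛍_α for every α ∈ [0,1]. -/
def IsGMFE [Fintype 𝒳] [Fintype 𝒰] (T : ℕ) (W : ℝ → ℝ → ℝ) (P : 𝒳 → 𝒰 → (𝒳 → ℝ) → 𝒳 → ℝ)
    (r : 𝒳 → 𝒰 → (𝒳 → ℝ) → ℝ) (μ0 : 𝒳 → ℝ)
    (πe : ℝ → ℕ → 𝒳 → 𝒰 → ℝ) (μ : ℕ → ℝ → 𝒳 → ℝ) : Prop :=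
  (∀ t x u, Measurable fun α => πe α t x u) ∧
  (∀ α ∈ Set.Icc (0:ℝ) 1, IsPolicy (πe α)) ∧
  IsMeanFieldOf W P μ0 πe μ ∧
  ∀ α ∈ Set.Icc (0:ℝ) 1, ∀ π' : ℕ → 𝒳 → 𝒰 → ℝ, IsPolicy π' →
    Jmf T r P μ0 (fun t => nbhd W (μ t) α) π' ≤ Jmf T r P μ0 (fun t => nbhd W (μ t) α) (πe α)

/-- α ↦ π^α is Lipschitz continuous up to a finite set D of discontinuities. -/
def EnsembleLipschitzUpTo [Fintype 𝒳] [Fintype 𝒰] (πe : ℝ → ℕ → 𝒳 → 𝒰 → ℝ) : Prop :=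
  ∃ (L : ℝ) (D : Finset ℝ), ∀ (t : ℕ) (x : 𝒳) (u : 𝒰),
    ∀ α ∈ Set.Icc (0:ℝ) 1, ∀ β ∈ Set.Icc (0:ℝ) 1,
      (∀ d ∈ D, d ∉ Set.uIcc α β) → |πe α t x u - πe β t x u| ≤ L * |α - β|

/-- Edge indicators of a simple (undirected) graph. -/
def IsEdgeWeights {N : ℕ} (ξ : Fin N → Fin N → ℝ) : Prop :=
  (∀ i j, ξ i j = 0 ∨ ξ i j = 1) ∧ ∀ i j, ξ i j = ξ j i

/-- Empirical neighborhood mean field 𝔾ⁱ = (1/N) Σ_j ξ_{ij} δ_{X^j}. -/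
noncomputable def empNbhd [Fintype 𝒳] [DecidableEq 𝒳] {N : ℕ} (ξ : Fin N → Fin N → ℝ)
    (X : Fin N → 𝒳) (i : Fin N) : 𝒳 → ℝ :=
  fun x => (N : ℝ)⁻¹ * ∑ j, ξ i j * (if X j = x then 1 else 0)

/-- The joint law of the N agents' states at time t: X^i_0 ∼ μ₀ i.i.d.,
U^i_t ∼ π^i_t(·|X^i_t), X^i_{t+1} ∼ P(·|X^i_t,U^i_t,𝔾^i_t) conditionally independently. -/
noncomputable def jointLaw [Fintype 𝒳] [DecidableEq 𝒳] [Fintype 𝒰] {N : ℕ}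
    (P : 𝒳 → 𝒰 → (𝒳 → ℝ) → 𝒳 → ℝ) (μ0 : 𝒳 → ℝ) (ξ : Fin N → Fin N → ℝ)
    (πs : Fin N → ℕ → 𝒳 → 𝒰 → ℝ) : ℕ → (Fin N → 𝒳) → ℝ
  | 0 => fun X => ∏ i, μ0 (X i)
  | (t+1) => fun Y => ∑ X : Fin N → 𝒳, jointLaw P μ0 ξ πs t X *
      ∏ i, ∑ u, πs i t (X i) u * P (X i) u (empNbhd ξ X i) (Y i)

/-- The objective J^N_i = E[Σ_{t<T} r(X^i_t,U^i_t,𝔾^i_t)] of agent i in the N-agent game. -/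
noncomputable def JN [Fintype 𝒳] [DecidableEq 𝒳] [Fintype 𝒰] {N : ℕ} (T : ℕ)
    (r : 𝒳 → 𝒰 → (𝒳 → ℝ) → ℝ) (P : 𝒳 → 𝒰 → (𝒳 → ℝ) → 𝒳 → ℝ) (μ0 : 𝒳 → ℝ)
    (ξ : Fin N → Fin N → ℝ) (πs : Fin N → ℕ → 𝒳 → 𝒰 → ℝ) (i : Fin N) : ℝ :=
  ∑ t ∈ Finset.range T, ∑ X : Fin N → 𝒳, jointLaw P μ0 ξ πs t X *
    ∑ u, πs i t (X i) u * r (X i) u (empNbhd ξ X i)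

/-- Γ_N(𝛑) = (π^{1/N},…,π^{N/N}) (agent i : Fin N has graphon index (i+1)/N). -/
noncomputable def gammaN (πe : ℝ → ℕ → 𝒳 → 𝒰 → ℝ) (N : ℕ) : Fin N → ℕ → 𝒳 → 𝒰 → ℝ :=
  fun i => πe ((((i : ℕ) : ℝ) + 1) / N)

/-- The step graphon W_N of a finite graph: W_N(x,y) = ξ_{⌈Nx⌉,⌈Ny⌉}. -/
noncomputable def stepGraphon {N : ℕ} (ξ : Fin N → Fin N → ℝ) : ℝ → ℝ → ℝ := fun a b =>
  ∑ i : Fin N, ∑ j : Fin N,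
    (if ((i : ℕ) : ℝ) / N < a ∧ a ≤ (((i : ℕ) : ℝ) + 1) / N then 1 else 0) *
    (if ((j : ℕ) : ℝ) / N < b ∧ b ≤ (((j : ℕ) : ℝ) + 1) / N then 1 else 0) * ξ i j

/-- Assumption (W): ‖W_N − W‖_{L∞→L1} → 0, i.e.
sup_{‖g‖∞ ≤ 1} ∫₀¹ |∫₀¹ (W_N(α,β) − W(α,β)) g(β) dβ| dα → 0. -/
def OpConvergesTo (WN : (N : ℕ) → ℝ → ℝ → ℝ) (W : ℝ → ℝ → ℝ) : Prop :=
  ∀ ε > (0:ℝ), ∃ N₀ : ℕ, ∀ N ≥ N₀, ∀ g : ℝ → ℝ, Measurable g → (∀ β, |g β| ≤ 1) →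
    (∫ α in Set.Ioc (0:ℝ) 1, |∫ β in Set.Ioc (0:ℝ) 1, (WN N α β - W α β) * g β|) ≤ ε

/-- ‖W_N − W‖_{L∞→L1} = O(1/√N). -/
def OpRateSqrt (WN : (N : ℕ) → ℝ → ℝ → ℝ) (W : ℝ → ℝ → ℝ) : Prop :=
  ∃ C : ℝ, ∀ N : ℕ, 1 ≤ N → ∀ g : ℝ → ℝ, Measurable g → (∀ β, |g β| ≤ 1) →
    (∫ α in Set.Ioc (0:ℝ) 1, |∫ β in Set.Ioc (0:ℝ) 1, (WN N α β - W α β) * g β|) ≤ C / Real.sqrt N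

/-- 𝛍^N_t(f) = ∫₀¹ f(X^{⌈Nα⌉}, α) dα, the integral of f against the random empirical
step measure ensemble. -/
noncomputable def empInt [Fintype 𝒳] {N : ℕ} (f : 𝒳 → ℝ → ℝ) (X : Fin N → 𝒳) : ℝ :=
  ∑ i : Fin N, ∫ α in Set.Ioc (((i : ℕ) : ℝ) / N) ((((i : ℕ) : ℝ) + 1) / N), f (X i) α

/-- 𝛍_t(f) = ∫₀¹ Σ_x f(x,α) μ^α_t(x) dα. -/
noncomputable def mfInt [Fintype 𝒳] (f : 𝒳 → ℝ → ℝ) (ν : ℝ → 𝒳 → ℝ) : ℝ :=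
  ∫ α in Set.Ioc (0:ℝ) 1, ∑ x, f x α * ν α x

/-- The representative α_m = (m+1)/M of the m-th equivalence class Ĩ_m = (m/M,(m+1)/M]. -/
noncomputable def rep (M : ℕ) (m : Fin M) : ℝ := (((m : ℕ) : ℝ) + 1) / M

/-- Discretized neighborhood mean field 𝔾̂^{α_m} = (1/M) Σ_n W(α_m,α_n) ν^{α_n}. -/
noncomputable def approxNbhd [Fintype 𝒳] {M : ℕ} (W : ℝ → ℝ → ℝ) (ν : Fin M → 𝒳 → ℝ)
    (m : Fin M) : 𝒳 → ℝ :=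
  fun x => (M : ℝ)⁻¹ * ∑ n, W (rep M m) (rep M n) * ν n x

/-- The approximate mean field μ̂ = Ψ̂(𝛑) of the M equivalence classes method. -/
noncomputable def approxMF [Fintype 𝒳] [Fintype 𝒰] {M : ℕ} (W : ℝ → ℝ → ℝ)
    (P : 𝒳 → 𝒰 → (𝒳 → ℝ) → 𝒳 → ℝ) (μ0 : 𝒳 → ℝ) (πm : Fin M → ℕ → 𝒳 → 𝒰 → ℝ) :
    ℕ → Fin M → 𝒳 → ℝ
  | 0 => fun _ => μ0
  | (t+1) => fun m x' => ∑ x, approxMF W P μ0 πm t m x *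
      ∑ u, πm m t x u * P x u (approxNbhd W (approxMF W P μ0 πm t) m) x'

/-- A solution (𝛑, 𝛍) of the M equivalence classes method: 𝛑 is determined by policies
π^{α_m} (one per class), each optimal for the generated approximate mean field 𝛍 = Ψ̂(𝛑). -/
def IsEqClassSolution [Fintype 𝒳] [Fintype 𝒰] (T : ℕ) {M : ℕ} (W : ℝ → ℝ → ℝ)
    (P : 𝒳 → 𝒰 → (𝒳 → ℝ) → 𝒳 → ℝ) (r : 𝒳 → 𝒰 → (𝒳 → ℝ) → ℝ) (μ0 : 𝒳 → ℝ)
    (πm : Fin M → ℕ → 𝒳 → 𝒰 → ℝ) : Prop :=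
  (∀ m, IsPolicy (πm m)) ∧
  ∀ m, ∀ π' : ℕ → 𝒳 → 𝒰 → ℝ, IsPolicy π' →
    Jmf T r P μ0 (fun t => approxNbhd W (approxMF W P μ0 πm t) m) π'
      ≤ Jmf T r P μ0 (fun t => approxNbhd W (approxMF W P μ0 πm t) m) (πm m)

/-- The optimal action value function Q with k steps to go from time t,
Q(t,x,u) = r(x,u,G_t) + Σ_{x'} P(x'|x,u,G_t) max_{u'} Q(t+1,x',u'). -/
noncomputable def Qfun [Fintype 𝒳] [Fintype 𝒰] [Nonempty 𝒰] (r : 𝒳 → 𝒰 → (𝒳 → ℝ) → ℝ)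
    (P : 𝒳 → 𝒰 → (𝒳 → ℝ) → 𝒳 → ℝ) (G : ℕ → 𝒳 → ℝ) : ℕ → ℕ → 𝒳 → 𝒰 → ℝ
  | 0 => fun _ _ _ => 0
  | (k+1) => fun t x u => r x u (G t) + ∑ x', P x u (G t) x' *
      Finset.univ.sup' Finset.univ_nonempty (fun u' => Qfun r P G k (t+1) x' u')

/-- The Boltzmann (softmax) policy Φ̂_η(𝛍) of the M equivalence classes method with
horizon T, temperature η and block mean field ν. -/
noncomputable def boltzmann [Fintype 𝒳] [Fintype 𝒰] [Nonempty 𝒰] (T : ℕ) (η : ℝ)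
    (r : 𝒳 → 𝒰 → (𝒳 → ℝ) → ℝ) (P : 𝒳 → 𝒰 → (𝒳 → ℝ) → 𝒳 → ℝ) (W : ℝ → ℝ → ℝ) {M : ℕ}
    (ν : ℕ → Fin M → 𝒳 → ℝ) : Fin M → ℕ → 𝒳 → 𝒰 → ℝ :=
  fun m t x u =>
    Real.exp (Qfun r P (fun s => approxNbhd W (ν s) m) (T - t) t x u / η) /
      ∑ u' : 𝒰, Real.exp (Qfun r P (fun s => approxNbhd W (ν s) m) (T - t) t x u' / η)

/-- One step 𝛍 ↦ Ψ̂(Φ̂_η(𝛍)) of the Boltzmann fixed point iteration. -/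
noncomputable def boltzIter [Fintype 𝒳] [Fintype 𝒰] [Nonempty 𝒰] (T : ℕ) (η : ℝ)
    (r : 𝒳 → 𝒰 → (𝒳 → ℝ) → ℝ) (P : 𝒳 → 𝒰 → (𝒳 → ℝ) → 𝒳 → ℝ) (W : ℝ → ℝ → ℝ) (μ0 : 𝒳 → ℝ)
    {M : ℕ} (ν : ℕ → Fin M → 𝒳 → ℝ) : ℕ → Fin M → 𝒳 → ℝ :=
  fun t => approxMF W P μ0 (boltzmann T η r P W ν) t

/-!
Both mean field recursions are mixtures of probability vectors, so the `L¹` distance between their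
states grows per step by at most `|LP|` times the distance between the neighborhood mean fields.
The latter is compared class by class: on the `n`-th class the integrand `W α β * ν β` differs from
its value at the representatives by at most `2 |LW| / M` (oscillation of `W`) plus the current
error. The error `e t` therefore obeys `e (t + 1) ≤ (1 + |LP|) * e t + 2 |LP| |LW| / M` with
`e 0 = 0`, whose solution `2 |LW| ((1 + |LP|) ^ t - 1) / M` is `O(1 / M)`.
-/

section SubProb

variable [Fintype 𝒳]

lemma simplex_subset_subProb : simplex 𝒳 ⊆ subProb 𝒳 := fun _ hp => ⟨hp.1, hp.2.le⟩

lemma le_one_of_mem_subProb {p : 𝒳 → ℝ} (hp : p ∈ subProb 𝒳) (x : 𝒳) : p x ≤ 1 :=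
  (Finset.single_le_sum (fun y _ => hp.1 y) (Finset.mem_univ x)).trans hp.2

lemma mul_mem_subProb {a : ℝ} (ha : a ∈ Set.Icc (0 : ℝ) 1) {p : 𝒳 → ℝ} (hp : p ∈ subProb 𝒳) :
    (fun x => a * p x) ∈ subProb 𝒳 := by
  refine ⟨fun x => mul_nonneg ha.1 (hp.1 x), ?_⟩
  rw [← Finset.mul_sum]
  exact mul_le_one₀ ha.2 (Finset.sum_nonneg fun x _ => hp.1 x) hp.2

end SubProb

section L1Distance

variable [Fintype 𝒳] {ι : Type*}

lemma l1dist_self (p : 𝒳 → ℝ) : l1dist p p = 0 := by simp [l1dist]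

lemma l1dist_nonneg (p q : 𝒳 → ℝ) : 0 ≤ l1dist p q :=
  Finset.sum_nonneg fun _ _ => abs_nonneg _

lemma l1dist_sum_le (s : Finset ι) (f g : ι → 𝒳 → ℝ) :
    l1dist (fun x => ∑ i ∈ s, f i x) (fun x => ∑ i ∈ s, g i x) ≤ ∑ i ∈ s, l1dist (f i) (g i) := by
  simp only [l1dist, ← Finset.sum_sub_distrib]
  rw [Finset.sum_comm]
  exact Finset.sum_le_sum fun x _ => Finset.abs_sum_le_sum_abs _ _

lemma l1dist_mul_le (a b : ℝ) {p : 𝒳 → ℝ} (hp : p ∈ subProb 𝒳) (q : 𝒳 → ℝ) :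
    l1dist (fun x => a * p x) (fun x => b * q x) ≤ |a - b| + |b| * l1dist p q := by
  have pointwise (x : 𝒳) : |a * p x - b * q x| ≤ |a - b| * p x + |b| * |p x - q x| := by
    calc |a * p x - b * q x| = |(a - b) * p x + b * (p x - q x)| := by ring_nf
      _ ≤ |(a - b) * p x| + |b * (p x - q x)| := abs_add_le _ _
      _ = |a - b| * p x + |b| * |p x - q x| := by rw [abs_mul, abs_mul, abs_of_nonneg (hp.1 x)]
  calc l1dist (fun x => a * p x) (fun x => b * q x)
      ≤ ∑ x, (|a - b| * p x + |b| * |p x - q x|) := Finset.sum_le_sum fun x _ => pointwise x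
    _ = |a - b| * ∑ x, p x + |b| * l1dist p q := by
        rw [Finset.sum_add_distrib, ← Finset.mul_sum, ← Finset.mul_sum, l1dist]
    _ ≤ |a - b| + |b| * l1dist p q := by
        gcongr
        exact mul_le_of_le_one_right (abs_nonneg _) hp.2

end L1Distance

section Mixture

variable {ι : Type*} [Fintype ι]

/-- The mixture `∑ i, p i • k i` of the mass functions `k i` with weights `p i`. -/
def mixture (p : ι → ℝ) (k : ι → 𝒳 → ℝ) : 𝒳 → ℝ := fun x => ∑ i, p i * k i x

lemma mixture_nonneg {p : ι → ℝ} {k : ι → 𝒳 → ℝ} (hp : ∀ i, 0 ≤ p i) (hk : ∀ i x, 0 ≤ k i x)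
    (x : 𝒳) : 0 ≤ mixture p k x :=
  Finset.sum_nonneg fun i _ => mul_nonneg (hp i) (hk i x)

variable [Fintype 𝒳]

lemma sum_mixture (p : ι → ℝ) (k : ι → 𝒳 → ℝ) :
    ∑ x, mixture p k x = ∑ i, p i * ∑ x, k i x := by
  simp only [mixture, Finset.mul_sum]
  exact Finset.sum_comm

lemma mixture_mem_simplex {p : ι → ℝ} {k : ι → 𝒳 → ℝ} (hp : p ∈ simplex ι)
    (hk : ∀ i, k i ∈ simplex 𝒳) : mixture p k ∈ simplex 𝒳 := by
  refine ⟨mixture_nonneg hp.1 fun i => (hk i).1, ?_⟩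
  simp only [sum_mixture, (hk _).2, mul_one, hp.2]

lemma mixture_mem_subProb {p : ι → ℝ} {k : ι → 𝒳 → ℝ} (hp : p ∈ subProb ι)
    (hk : ∀ i, k i ∈ subProb 𝒳) : mixture p k ∈ subProb 𝒳 := by
  refine ⟨mixture_nonneg hp.1 fun i => (hk i).1, ?_⟩
  rw [sum_mixture]
  exact (Finset.sum_le_sum fun i _ => mul_le_of_le_one_right (hp.1 i) (hk i).2).trans hp.2

lemma l1dist_mixture_le (p : ι → ℝ) {q : ι → ℝ} {k k' : ι → 𝒳 → ℝ} {D : ℝ} (hq : q ∈ simplex ι)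
    (hk : ∀ i, k i ∈ subProb 𝒳) (hD : ∀ i, l1dist (k i) (k' i) ≤ D) :
    l1dist (mixture p k) (mixture q k') ≤ l1dist p q + D := by
  calc l1dist (mixture p k) (mixture q k')
      ≤ ∑ i, l1dist (fun x => p i * k i x) (fun x => q i * k' i x) := l1dist_sum_le _ _ _
    _ ≤ ∑ i, (|p i - q i| + q i * D) := by
        refine Finset.sum_le_sum fun i _ => (l1dist_mul_le _ _ (hk i) _).trans ?_
        rw [abs_of_nonneg (hq.1 i)]
        gcongr
        exacts [hq.1 i, hD i]
    _ = l1dist p q + D := by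
        rw [Finset.sum_add_distrib, ← Finset.sum_mul, hq.2, one_mul, l1dist]

end Mixture

section Integral

variable [Fintype 𝒳] {Ω : Type*} [MeasurableSpace Ω] {ρ : Measure Ω} {f g : Ω → 𝒳 → ℝ}

lemma integrable_l1dist (hf : ∀ x, Integrable (fun ω => f ω x) ρ)
    (hg : ∀ x, Integrable (fun ω => g ω x) ρ) : Integrable (fun ω => l1dist (f ω) (g ω)) ρ :=
  integrable_finsetSum _ fun x _ => ((hf x).sub (hg x)).abs

lemma l1dist_integral_le (hf : ∀ x, Integrable (fun ω => f ω x) ρ)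
    (hg : ∀ x, Integrable (fun ω => g ω x) ρ) :
    l1dist (fun x => ∫ ω, f ω x ∂ρ) (fun x => ∫ ω, g ω x ∂ρ) ≤ ∫ ω, l1dist (f ω) (g ω) ∂ρ := by
  calc l1dist (fun x => ∫ ω, f ω x ∂ρ) (fun x => ∫ ω, g ω x ∂ρ)
      = ∑ x, |∫ ω, (f ω x - g ω x) ∂ρ| := by simp only [l1dist, integral_sub (hf _) (hg _)]
    _ ≤ ∑ x, ∫ ω, |f ω x - g ω x| ∂ρ := Finset.sum_le_sum fun x _ => abs_integral_le_integral_abs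
    _ = ∫ ω, l1dist (f ω) (g ω) ∂ρ :=
        (integral_finsetSum _ fun x _ => ((hf x).sub (hg x)).abs).symm

lemma integrable_of_ae_mem_subProb [IsFiniteMeasure ρ]
    (hfm : ∀ x, AEStronglyMeasurable (fun ω => f ω x) ρ) (hf : ∀ᵐ ω ∂ρ, f ω ∈ subProb 𝒳) (x : 𝒳) :
    Integrable (fun ω => f ω x) ρ := by
  refine Integrable.of_bound (hfm x) 1 ?_
  filter_upwards [hf] with ω hω
  rw [Real.norm_of_nonneg (hω.1 x)]
  exact le_one_of_mem_subProb hω x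

lemma integral_mem_subProb [IsProbabilityMeasure ρ]
    (hfm : ∀ x, AEStronglyMeasurable (fun ω => f ω x) ρ) (hf : ∀ᵐ ω ∂ρ, f ω ∈ subProb 𝒳) :
    (fun x => ∫ ω, f ω x ∂ρ) ∈ subProb 𝒳 := by
  have hint (x : 𝒳) := integrable_of_ae_mem_subProb hfm hf x
  refine ⟨fun x => integral_nonneg_of_ae (hf.mono fun ω hω => hω.1 x), ?_⟩
  calc ∑ x, ∫ ω, f ω x ∂ρ = ∫ ω, ∑ x, f ω x ∂ρ := (integral_finsetSum _ fun x _ => hint x).symm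
    _ ≤ ∫ _, (1 : ℝ) ∂ρ :=
        integral_mono_ae (integrable_finsetSum _ fun x _ => hint x) (integrable_const 1)
          (hf.mono fun ω hω => hω.2)
    _ = 1 := by simp

end Integral

section LawStep

variable [Fintype 𝒳] [Fintype 𝒰] {P : 𝒳 → 𝒰 → (𝒳 → ℝ) → 𝒳 → ℝ} {π : 𝒳 → 𝒰 → ℝ}

/-- The evolution `ν ↦ ∑ x, ∑ u, ν x * π x u * P x u G ·` of a state law over one time step, for
the decision rule `π` and the neighborhood mean field `G`. It drives both the exact and the
approximate mean field. -/
def lawStep (P : 𝒳 → 𝒰 → (𝒳 → ℝ) → 𝒳 → ℝ) (π : 𝒳 → 𝒰 → ℝ) (G ν : 𝒳 → ℝ) : 𝒳 → ℝ :=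
  mixture ν fun x => mixture (π x) fun u => P x u G

lemma lawStep_mem_simplex (hP : IsKernel P) (hπ : ∀ x, π x ∈ simplex 𝒰) {G ν : 𝒳 → ℝ}
    (hG : G ∈ subProb 𝒳) (hν : ν ∈ simplex 𝒳) : lawStep P π G ν ∈ simplex 𝒳 :=
  mixture_mem_simplex hν fun x => mixture_mem_simplex (hπ x) fun u => hP x u G hG

lemma l1dist_lawStep_le {L : ℝ} (hP : IsKernel P) (hL : KernelLipschitz P L)
    (hπ : ∀ x, π x ∈ simplex 𝒰) {G G' : 𝒳 → ℝ} (hG : G ∈ subProb 𝒳) (hG' : G' ∈ subProb 𝒳)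
    (ν : 𝒳 → ℝ) {ν' : 𝒳 → ℝ} (hν' : ν' ∈ simplex 𝒳) :
    l1dist (lawStep P π G ν) (lawStep P π G' ν') ≤ l1dist ν ν' + |L| * l1dist G G' := by
  have hPG (x : 𝒳) (u : 𝒰) : P x u G ∈ simplex 𝒳 := hP x u G hG
  have hPdist (x : 𝒳) (u : 𝒰) : l1dist (P x u G) (P x u G') ≤ |L| * l1dist G G' :=
    (hL x u G G' hG hG').trans (mul_le_mul_of_nonneg_right (le_abs_self L) (l1dist_nonneg _ _))
  refine l1dist_mixture_le ν hν'
    (fun x => simplex_subset_subProb (mixture_mem_simplex (hπ x) (hPG x))) fun x => ?_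
  calc l1dist (mixture (π x) fun u => P x u G) (mixture (π x) fun u => P x u G')
      ≤ l1dist (π x) (π x) + |L| * l1dist G G' :=
        l1dist_mixture_le _ (hπ x) (fun u => simplex_subset_subProb (hPG x u)) (hPdist x)
    _ = |L| * l1dist G G' := by rw [l1dist_self, zero_add]

end LawStep

section EqClass

variable {M : ℕ}

/-- The `m`-th equivalence class `Ĩ_m = (m/M, (m+1)/M]` of indices; its representative `rep M m`
is its right endpoint. -/
def eqClass (M : ℕ) (m : Fin M) : Set ℝ :=
  Set.Ioc (((m : ℕ) : ℝ) / M) ((((m : ℕ) : ℝ) + 1) / M)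

lemma measurableSet_eqClass (m : Fin M) : MeasurableSet (eqClass M m) := measurableSet_Ioc

lemma monotone_natCast_div (M : ℕ) : Monotone fun k : ℕ => (k : ℝ) / M :=
  Nat.mono_cast.div_const M.cast_nonneg

lemma iUnion_eqClass (hM : M ≠ 0) : ⋃ m, eqClass M m = Set.Ioc 0 1 := by
  have h := (monotone_natCast_div M).biUnion_Ico_Ioc_map_succ 0 M
  simp only [Nat.cast_zero, zero_div, div_self (Nat.cast_ne_zero (R := ℝ).2 hM)] at h
  rw [← h]
  ext α
  simp [eqClass, Fin.exists_iff]

lemma pairwise_disjoint_eqClass :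
    Pairwise (Function.onFun Disjoint (eqClass M)) := fun m n hmn => by
  simpa [Function.onFun, eqClass] using
    (monotone_natCast_div M).pairwise_disjoint_on_Ioc_succ (Fin.val_ne_of_ne hmn)

lemma eqClass_subset_Ioc (m : Fin M) : eqClass M m ⊆ Set.Ioc 0 1 :=
  iUnion_eqClass m.pos.ne' ▸ Set.subset_iUnion (eqClass M) m

lemma eqClass_subset_Icc (m : Fin M) : eqClass M m ⊆ Set.Icc 0 1 :=
  (eqClass_subset_Ioc m).trans Set.Ioc_subset_Icc_self

lemma rep_mem_eqClass (m : Fin M) : rep M m ∈ eqClass M m := by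
  have hM : (0 : ℝ) < M := Nat.cast_pos.2 m.pos
  exact ⟨div_lt_div_of_pos_right (lt_add_one _) hM, le_rfl⟩

lemma abs_sub_le_of_mem_eqClass {m : Fin M} {α β : ℝ} (hα : α ∈ eqClass M m)
    (hβ : β ∈ eqClass M m) : |α - β| ≤ 1 / M := by
  obtain ⟨hα₁, hα₂⟩ := hα
  obtain ⟨hβ₁, hβ₂⟩ := hβ
  rw [add_div] at hα₂ hβ₂
  rw [abs_le]
  constructor <;> linarith

lemma volume_real_eqClass (m : Fin M) : volume.real (eqClass M m) = 1 / M := by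
  rw [eqClass, Real.volume_real_Ioc_of_le (by gcongr; linarith)]
  ring

lemma integrableOn_const_eqClass (m : Fin M) (c : ℝ) :
    IntegrableOn (fun _ => c) (eqClass M m) :=
  integrableOn_const measure_Ioc_lt_top.ne

lemma setIntegral_const_eqClass (m : Fin M) (c : ℝ) : ∫ _ in eqClass M m, c = (M : ℝ)⁻¹ * c := by
  rw [setIntegral_const, volume_real_eqClass, one_div, smul_eq_mul]

lemma setIntegral_eq_sum_eqClass (hM : M ≠ 0) {E : Type*} [NormedAddCommGroup E] [NormedSpace ℝ E]
    {f : ℝ → E} (hf : IntegrableOn f (Set.Ioc 0 1)) :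
    ∫ β in Set.Ioc 0 1, f β = ∑ m, ∫ β in eqClass M m, f β := by
  rw [← iUnion_eqClass hM]
  exact integral_iUnion_fintype measurableSet_eqClass pairwise_disjoint_eqClass
    fun m => hf.mono_set (eqClass_subset_Ioc m)

end EqClass

section Graphon

variable {W : ℝ → ℝ → ℝ} {L : ℝ} {M : ℕ}

lemma GraphonLipschitz.continuousOn (hL : GraphonLipschitz W L) {α : ℝ}
    (hα : α ∈ Set.Icc (0 : ℝ) 1) : ContinuousOn (W α) (Set.Icc 0 1) :=
  (LipschitzOnWith.of_dist_le' fun β hβ β' hβ' => by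
    simpa [Real.dist_eq] using hL α β α β' hα hβ hα hβ').continuousOn

lemma GraphonLipschitz.aestronglyMeasurable (hL : GraphonLipschitz W L) {α : ℝ}
    (hα : α ∈ Set.Icc (0 : ℝ) 1) :
    AEStronglyMeasurable (W α) (volume.restrict (Set.Ioc 0 1)) :=
  ((hL.continuousOn hα).mono Set.Ioc_subset_Icc_self).aestronglyMeasurable measurableSet_Ioc

lemma GraphonLipschitz.abs_sub_rep_le (hL : GraphonLipschitz W L) {m n : Fin M} {α β : ℝ}
    (hα : α ∈ eqClass M m) (hβ : β ∈ eqClass M n) :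
    |W α β - W (rep M m) (rep M n)| ≤ 2 * |L| / M := by
  calc |W α β - W (rep M m) (rep M n)|
      ≤ L * (|α - rep M m| + |β - rep M n|) :=
        hL _ _ _ _ (eqClass_subset_Icc m hα) (eqClass_subset_Icc n hβ)
          (eqClass_subset_Icc m (rep_mem_eqClass m)) (eqClass_subset_Icc n (rep_mem_eqClass n))
    _ ≤ |L| * (1 / M + 1 / M) := by
        gcongr
        exacts [le_abs_self L, abs_sub_le_of_mem_eqClass hα (rep_mem_eqClass m),
          abs_sub_le_of_mem_eqClass hβ (rep_mem_eqClass n)]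
    _ = 2 * |L| / M := by ring

end Graphon

section Neighborhood

variable [Fintype 𝒳] {W : ℝ → ℝ → ℝ} {ν : ℝ → 𝒳 → ℝ} {α : ℝ} {M : ℕ}

lemma ae_mul_mem_subProb (hW : ∀ a b, W a b ∈ Set.Icc (0 : ℝ) 1)
    (hν : ∀ β ∈ Set.Ioc (0 : ℝ) 1, ν β ∈ subProb 𝒳) (α : ℝ) :
    ∀ᵐ β ∂volume.restrict (Set.Ioc 0 1), (fun x => W α β * ν β x) ∈ subProb 𝒳 :=
  ae_restrict_of_forall_mem measurableSet_Ioc fun β hβ => mul_mem_subProb (hW α β) (hν β hβ)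

lemma integrableOn_mul_of_mem_subProb (hW : ∀ a b, W a b ∈ Set.Icc (0 : ℝ) 1)
    (hWα : AEStronglyMeasurable (W α) (volume.restrict (Set.Ioc 0 1)))
    (hνm : ∀ x, Measurable fun β => ν β x) (hν : ∀ β ∈ Set.Ioc (0 : ℝ) 1, ν β ∈ subProb 𝒳) (x : 𝒳) :
    IntegrableOn (fun β => W α β * ν β x) (Set.Ioc 0 1) :=
  integrable_of_ae_mem_subProb (fun x => hWα.mul (hνm x).aestronglyMeasurable)
    (ae_mul_mem_subProb hW hν α) x

lemma nbhd_mem_subProb (hW : ∀ a b, W a b ∈ Set.Icc (0 : ℝ) 1)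
    (hWα : AEStronglyMeasurable (W α) (volume.restrict (Set.Ioc 0 1)))
    (hνm : ∀ x, Measurable fun β => ν β x) (hν : ∀ β ∈ Set.Ioc (0 : ℝ) 1, ν β ∈ subProb 𝒳) :
    nbhd W ν α ∈ subProb 𝒳 :=
  have : IsProbabilityMeasure (volume.restrict (Set.Ioc (0 : ℝ) 1)) := ⟨by simp⟩
  integral_mem_subProb (fun x => hWα.mul (hνm x).aestronglyMeasurable) (ae_mul_mem_subProb hW hν α)

lemma approxNbhd_eq_mixture (W : ℝ → ℝ → ℝ) (ν' : Fin M → 𝒳 → ℝ) (m : Fin M) :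
    approxNbhd W ν' m = mixture (fun n => (M : ℝ)⁻¹ * W (rep M m) (rep M n)) ν' := by
  ext x
  simp only [approxNbhd, mixture, Finset.mul_sum, mul_assoc]

lemma approxNbhd_mem_subProb (hW : ∀ a b, W a b ∈ Set.Icc (0 : ℝ) 1) {ν' : Fin M → 𝒳 → ℝ}
    (hν' : ∀ n, ν' n ∈ subProb 𝒳) (m : Fin M) : approxNbhd W ν' m ∈ subProb 𝒳 := by
  have hM : (M : ℝ) ≠ 0 := Nat.cast_ne_zero.2 m.pos.ne'
  rw [approxNbhd_eq_mixture]
  refine mixture_mem_subProb ⟨fun n => mul_nonneg (by positivity) (hW _ _).1, ?_⟩ hν'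
  calc ∑ n, (M : ℝ)⁻¹ * W (rep M m) (rep M n)
      ≤ ∑ _n : Fin M, (M : ℝ)⁻¹ :=
        Finset.sum_le_sum fun n _ => mul_le_of_le_one_right (by positivity) (hW _ _).2
    _ = 1 := by simp [hM]

lemma l1dist_mul_rep_le {L D : ℝ} {m n : Fin M} {β : ℝ} {ν' : Fin M → 𝒳 → ℝ}
    (hW : ∀ a b, W a b ∈ Set.Icc (0 : ℝ) 1) (hL : GraphonLipschitz W L) (hα : α ∈ eqClass M m)
    (hβ : β ∈ eqClass M n) (hν : ν β ∈ subProb 𝒳) (hD : l1dist (ν β) (ν' n) ≤ D) :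
    l1dist (fun x => W α β * ν β x) (fun x => W (rep M m) (rep M n) * ν' n x)
      ≤ 2 * |L| / M + D := by
  refine (l1dist_mul_le _ _ hν _).trans (add_le_add (hL.abs_sub_rep_le hα hβ) ?_)
  rw [abs_of_nonneg (hW _ _).1]
  exact (mul_le_of_le_one_left (l1dist_nonneg _ _) (hW _ _).2).trans hD

lemma l1dist_nbhd_approxNbhd_le {L D : ℝ} {m : Fin M} {ν' : Fin M → 𝒳 → ℝ}
    (hW : ∀ a b, W a b ∈ Set.Icc (0 : ℝ) 1) (hL : GraphonLipschitz W L)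
    (hνm : ∀ x, Measurable fun β => ν β x) (hν : ∀ β ∈ Set.Ioc (0 : ℝ) 1, ν β ∈ subProb 𝒳)
    (hD : ∀ n, ∀ β ∈ eqClass M n, l1dist (ν β) (ν' n) ≤ D) (hα : α ∈ eqClass M m) :
    l1dist (nbhd W ν α) (approxNbhd W ν' m) ≤ 2 * |L| / M + D := by
  have hM : (M : ℝ) ≠ 0 := Nat.cast_ne_zero.2 m.pos.ne'
  have hint := integrableOn_mul_of_mem_subProb hW
    (hL.aestronglyMeasurable (eqClass_subset_Icc m hα)) hνm hν
  have hint_class (n : Fin M) (x : 𝒳) := (hint x).mono_set (eqClass_subset_Ioc n)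
  have hconst (n : Fin M) (x : 𝒳) :=
    integrableOn_const_eqClass n (W (rep M m) (rep M n) * ν' n x)
  have hnbhd : nbhd W ν α = fun x => ∑ n, ∫ β in eqClass M n, W α β * ν β x :=
    funext fun x => setIntegral_eq_sum_eqClass m.pos.ne' (hint x)
  have happrox : approxNbhd W ν' m =
      fun x => ∑ n, ∫ _ in eqClass M n, W (rep M m) (rep M n) * ν' n x := by
    simp only [setIntegral_const_eqClass, ← Finset.mul_sum]
    rfl
  rw [hnbhd, happrox]
  calc l1dist (fun x => ∑ n, ∫ β in eqClass M n, W α β * ν β x)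
        (fun x => ∑ n, ∫ _ in eqClass M n, W (rep M m) (rep M n) * ν' n x)
      ≤ ∑ n, ∫ β in eqClass M n,
          l1dist (fun x => W α β * ν β x) (fun x => W (rep M m) (rep M n) * ν' n x) :=
        (l1dist_sum_le _ _ _).trans <|
          Finset.sum_le_sum fun n _ => l1dist_integral_le (hint_class n) (hconst n)
    _ ≤ ∑ n, ∫ _ in eqClass M n, (2 * |L| / M + D) :=
        Finset.sum_le_sum fun n _ => setIntegral_mono_on
          (integrable_l1dist (hint_class n) (hconst n)) (integrableOn_const_eqClass n _)
          (measurableSet_eqClass n) fun β hβ =>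
            l1dist_mul_rep_le hW hL hα hβ (hν β (eqClass_subset_Ioc n hβ)) (hD n β hβ)
    _ = 2 * |L| / M + D := by
        simp only [setIntegral_const_eqClass, Finset.sum_const, Finset.card_univ, Fintype.card_fin,
          nsmul_eq_mul, mul_inv_cancel_left₀ hM]

end Neighborhood

section MeanField

variable [Fintype 𝒳] [Fintype 𝒰] {M : ℕ} {W : ℝ → ℝ → ℝ} {P : 𝒳 → 𝒰 → (𝒳 → ℝ) → 𝒳 → ℝ}
  {μ0 : 𝒳 → ℝ} {πm : Fin M → ℕ → 𝒳 → 𝒰 → ℝ} {πe : ℝ → ℕ → 𝒳 → 𝒰 → ℝ} {μ : ℕ → ℝ → 𝒳 → ℝ}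

lemma approxMF_succ (t : ℕ) (m : Fin M) :
    approxMF W P μ0 πm (t + 1) m =
      lawStep P (πm m t) (approxNbhd W (approxMF W P μ0 πm t) m) (approxMF W P μ0 πm t m) :=
  rfl

lemma approxMF_mem_simplex (hμ0 : μ0 ∈ simplex 𝒳) (hP : IsKernel P)
    (hW : ∀ a b, W a b ∈ Set.Icc (0 : ℝ) 1) (hπ : ∀ m, IsPolicy (πm m)) (t : ℕ) (m : Fin M) :
    approxMF W P μ0 πm t m ∈ simplex 𝒳 := by
  induction t generalizing m with
  | zero => exact hμ0
  | succ t ih =>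
    exact lawStep_mem_simplex hP (hπ m t)
      (approxNbhd_mem_subProb hW (fun n => simplex_subset_subProb (ih n)) m) (ih m)

namespace IsMeanFieldOf

lemma succ_eq_lawStep (h : IsMeanFieldOf W P μ0 πe μ) (t : ℕ) {α : ℝ}
    (hα : α ∈ Set.Icc (0 : ℝ) 1) :
    μ (t + 1) α = lawStep P (πe α t) (nbhd W (μ t) α) (μ t α) :=
  funext (h.2.2 t α hα)

lemma mem_simplex (h : IsMeanFieldOf W P μ0 πe μ) (hμ0 : μ0 ∈ simplex 𝒳) (hP : IsKernel P)
    (hW : ∀ a b, W a b ∈ Set.Icc (0 : ℝ) 1)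
    (hWm : ∀ α ∈ Set.Ioc (0 : ℝ) 1, AEStronglyMeasurable (W α) (volume.restrict (Set.Ioc 0 1)))
    (hπ : ∀ α ∈ Set.Ioc (0 : ℝ) 1, IsPolicy (πe α)) (t : ℕ) :
    ∀ α ∈ Set.Ioc (0 : ℝ) 1, μ t α ∈ simplex 𝒳 := by
  induction t with
  | zero => exact fun α hα => h.2.1 α (Set.Ioc_subset_Icc_self hα) ▸ hμ0
  | succ t ih =>
    intro α hα
    rw [h.succ_eq_lawStep t (Set.Ioc_subset_Icc_self hα)]
    exact lawStep_mem_simplex hP (hπ α hα t)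
      (nbhd_mem_subProb hW (hWm α hα) (h.1 t) fun β hβ => simplex_subset_subProb (ih β hβ))
      (ih α hα)

lemma l1dist_succ_le (h : IsMeanFieldOf W P μ0 πe μ) {LP LW D : ℝ} (hP : IsKernel P)
    (hPLip : KernelLipschitz P LP) (hW : ∀ a b, W a b ∈ Set.Icc (0 : ℝ) 1)
    (hWLip : GraphonLipschitz W LW) (hπ : ∀ m, IsPolicy (πm m))
    (hblock : ∀ m, ∀ α ∈ eqClass M m, πe α = πm m) {t : ℕ}
    (hexact : ∀ β ∈ Set.Ioc (0 : ℝ) 1, μ t β ∈ subProb 𝒳)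
    (happrox : ∀ n, approxMF W P μ0 πm t n ∈ simplex 𝒳)
    (hD : ∀ n, ∀ β ∈ eqClass M n, l1dist (μ t β) (approxMF W P μ0 πm t n) ≤ D) {m : Fin M} {α : ℝ}
    (hα : α ∈ eqClass M m) :
    l1dist (μ (t + 1) α) (approxMF W P μ0 πm (t + 1) m) ≤ D + |LP| * (2 * |LW| / M + D) := by
  have hα' := eqClass_subset_Icc m hα
  have hG : nbhd W (μ t) α ∈ subProb 𝒳 :=
    nbhd_mem_subProb hW (hWLip.aestronglyMeasurable hα') (h.1 t) hexact
  have hG' : approxNbhd W (approxMF W P μ0 πm t) m ∈ subProb 𝒳 :=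
    approxNbhd_mem_subProb hW (fun n => simplex_subset_subProb (happrox n)) m
  rw [h.succ_eq_lawStep t hα', hblock m α hα, approxMF_succ]
  calc l1dist (lawStep P (πm m t) (nbhd W (μ t) α) (μ t α))
        (lawStep P (πm m t) (approxNbhd W (approxMF W P μ0 πm t) m) (approxMF W P μ0 πm t m))
      ≤ l1dist (μ t α) (approxMF W P μ0 πm t m) +
          |LP| * l1dist (nbhd W (μ t) α) (approxNbhd W (approxMF W P μ0 πm t) m) :=
        l1dist_lawStep_le hP hPLip (hπ m t) hG hG' _ (happrox m)
    _ ≤ D + |LP| * (2 * |LW| / M + D) := by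
        gcongr
        exacts [hD m α hα, l1dist_nbhd_approxNbhd_le hW hWLip (h.1 t) hexact hD hα]

end IsMeanFieldOf

theorem eq_class_mean_field_convergence_general {LP LW : ℝ} (hμ0 : μ0 ∈ simplex 𝒳)
    (hP : IsKernel P) (hPLip : KernelLipschitz P LP) (hW : ∀ a b, W a b ∈ Set.Icc (0 : ℝ) 1)
    (hWLip : GraphonLipschitz W LW) (hπ : ∀ m, IsPolicy (πm m))
    (hblock : ∀ m, ∀ α ∈ eqClass M m, πe α = πm m) (hμ : IsMeanFieldOf W P μ0 πe μ) (t : ℕ)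
    (m : Fin M) {α : ℝ} (hα : α ∈ eqClass M m) :
    l1dist (μ t α) (approxMF W P μ0 πm t m) ≤ 2 * |LW| * ((1 + |LP|) ^ t - 1) / M := by
  have hWm (α : ℝ) (hα : α ∈ Set.Ioc (0 : ℝ) 1) := hWLip.aestronglyMeasurable
    (Set.Ioc_subset_Icc_self hα)
  have hπe (α : ℝ) (hα : α ∈ Set.Ioc (0 : ℝ) 1) : IsPolicy (πe α) := by
    obtain ⟨n, hn⟩ : ∃ n, α ∈ eqClass M n := by rwa [← Set.mem_iUnion, iUnion_eqClass m.pos.ne']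
    exact hblock n α hn ▸ hπ n
  have hexact (s : ℕ) (β : ℝ) (hβ : β ∈ Set.Ioc (0 : ℝ) 1) : μ s β ∈ subProb 𝒳 :=
    simplex_subset_subProb (hμ.mem_simplex hμ0 hP hW hWm hπe s β hβ)
  have happrox (s : ℕ) (n : Fin M) := approxMF_mem_simplex hμ0 hP hW hπ s n
  induction t generalizing m α with
  | zero =>
    rw [hμ.2.1 α (eqClass_subset_Icc m hα)]
    simp [approxMF, l1dist_self]
  | succ t ih =>
    refine (hμ.l1dist_succ_le hP hPLip hW hWLip hπ hblock (hexact t) (happrox t)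
      (fun n β hβ => ih n hβ) hα).trans_eq ?_
    ring

end MeanField

/-- under Assumption (Lip), for solutions of the M equivalence classes
method (one for each M), the exact mean field ensemble 𝛍̄ = Ψ(𝛑) generated by the
block-constant policy ensemble 𝛑 converges to the method's approximate mean field,
uniformly over the equivalence classes: for every t ∈ {0,…,T},
max_m sup_{α∈Ĩ_m} ‖μ̄^α_t − μ^{α_m}_t‖₁ → 0 as M → ∞. -/
theorem eq_class_mean_field_convergence
    {𝒳 𝒰 : Type*} [Fintype 𝒳] [Nonempty 𝒳] [Fintype 𝒰] [Nonempty 𝒰]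
    (T : ℕ) (μ0 : 𝒳 → ℝ) (hμ0 : μ0 ∈ simplex 𝒳)
    (P : 𝒳 → 𝒰 → (𝒳 → ℝ) → 𝒳 → ℝ) (hP : IsKernel P)
    (r : 𝒳 → 𝒰 → (𝒳 → ℝ) → ℝ)
    (Lr LP LW : ℝ) (hrLip : RewardLipschitz r Lr) (hPLip : KernelLipschitz P LP)
    (W : ℝ → ℝ → ℝ) (hW : IsGraphon W) (hWLip : GraphonLipschitz W LW)
    (πmF : (M : ℕ) → Fin M → ℕ → 𝒳 → 𝒰 → ℝ)
    (hsol : ∀ M : ℕ, IsEqClassSolution T W P r μ0 (πmF M))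
    (πeF : (M : ℕ) → ℝ → ℕ → 𝒳 → 𝒰 → ℝ)
    (hblock : ∀ (M : ℕ) (m : Fin M) (α : ℝ),
      α ∈ Set.Ioc (((m : ℕ) : ℝ) / M) ((((m : ℕ) : ℝ) + 1) / M) → πeF M α = πmF M m)
    (hblock0 : ∀ (M : ℕ) (m : Fin M), (m : ℕ) = 0 → πeF M 0 = πmF M m)
    (μbarF : (M : ℕ) → ℕ → ℝ → 𝒳 → ℝ)
    (hmf : ∀ M : ℕ, 0 < M → IsMeanFieldOf W P μ0 (πeF M) (μbarF M)) :
    ∀ t ≤ T, ∀ ε > (0:ℝ), ∃ M₀ : ℕ, ∀ M > M₀, ∀ m : Fin M,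
      ∀ α ∈ Set.Ioc (((m : ℕ) : ℝ) / M) ((((m : ℕ) : ℝ) + 1) / M),
        l1dist (μbarF M t α) (approxMF W P μ0 (πmF M) t m) < ε := by
  intro t _ ε hε
  obtain ⟨M₀, hM₀⟩ := eventually_atTop.1 <| (tendsto_const_div_atTop_nhds_zero_nat
    (2 * |LW| * ((1 + |LP|) ^ t - 1))).eventually_lt_const hε
  exact ⟨M₀, fun M hM m α hα => (eq_class_mean_field_convergence_general hμ0 hP hPLip hW.2.2 hWLip
    (hsol M).1 (hblock M) (hmf M m.pos) t m hα).trans_lt (hM₀ M hM.le)⟩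

end GMFG
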